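/- For all positive integers a < b with a dividing b, the complete bipartite graph K_{a,b} satisfies š(K_{a,b}) = 1 + b/a. -/

import Mathlib

open SimpleGraph Finset

/-- A proper edge coloring of `G` with colors in `ℕ`: distinct edges of `G`
sharing an endpoint receive distinct colors. -/
def IsProperEdgeColoring {V : Type*} (G : SimpleGraph V) (c : Sym2 V → ℕ) : Prop :=
  ∀ e₁ ∈ G.edgeSet, ∀ e₂ ∈ G.edgeSet, e₁ ≠ e₂ → (∃ v, v ∈ e₁ ∧ v ∈ e₂) → c e₁ ≠ c e₂

/-- The palette of a vertex `v`: the set of colors appearing on edges of `G` incident with `v`. -/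
def palette {V : Type*} (G : SimpleGraph V) (c : Sym2 V → ℕ) (v : V) : Set ℕ :=
  {n | ∃ e ∈ G.edgeSet, v ∈ e ∧ c e = n}

/-- The palette index of `G`: the minimum number of distinct palettes occurring in a
proper edge coloring of `G`. -/
noncomputable def paletteIndex {V : Type*} (G : SimpleGraph V) : ℕ :=
  sInf {k | ∃ c : Sym2 V → ℕ, IsProperEdgeColoring G c ∧ (Set.range (palette G c)).ncard = k}

/-!
In a proper edge coloring the palette of `v` has `deg v` elements, and each of its colors also
occurs in the palette of a neighbor of `v`. If all neighbors have degree at most `d < deg v`, then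
at least `deg v / d` palettes occur on the neighbors, and none of them is the palette of `v`. A
vertex of the smaller side of `K_{a,b}` gives the lower bound `1 + b/a`.

Conversely, let `b = m a`, split the larger side into `m` copies of `ℤ/a`, and color the edge from
`x` to the element `z` of the `k`-th copy with `(k, x + z)`. Every vertex of the smaller side sees
all colors, and a vertex of the `k`-th copy sees exactly the colors with first component `k`.
-/

section Palette

variable {V : Type*} {G : SimpleGraph V} {c : Sym2 V → ℕ}

lemma palette_eq_image_neighborSet (G : SimpleGraph V) (c : Sym2 V → ℕ) (v : V) :
    palette G c v = (fun w => c s(v, w)) '' G.neighborSet v := by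
  ext n
  constructor
  · rintro ⟨e, he, hv, rfl⟩
    obtain ⟨w, rfl⟩ := Sym2.mem_iff_exists.1 hv
    exact ⟨w, he, rfl⟩
  · rintro ⟨w, hw, rfl⟩
    exact ⟨s(v, w), hw, Sym2.mem_mk_left v w, rfl⟩

lemma palette_finite (G : SimpleGraph V) (c : Sym2 V → ℕ) (v : V) [Finite (G.neighborSet v)] :
    (palette G c v).Finite := by
  rw [palette_eq_image_neighborSet]
  exact (Set.toFinite _).image _

lemma isProperEdgeColoring_iff_injOn_neighborSet :
    IsProperEdgeColoring G c ↔ ∀ v, Set.InjOn (fun w => c s(v, w)) (G.neighborSet v) := by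
  constructor
  · intro hc v w hw w' hw' heq
    by_contra hne
    exact hc s(v, w) hw s(v, w') hw' (mt Sym2.congr_right.1 hne)
      ⟨v, Sym2.mem_mk_left v w, Sym2.mem_mk_left v w'⟩ heq
  · rintro hinj e he e' he' hne ⟨v, hv, hv'⟩ heq
    obtain ⟨w, rfl⟩ := Sym2.mem_iff_exists.1 hv
    obtain ⟨w', rfl⟩ := Sym2.mem_iff_exists.1 hv'
    exact hne (Sym2.congr_right.2 (hinj v he he' heq))

lemma IsProperEdgeColoring.ncard_palette (hc : IsProperEdgeColoring G c) (v : V)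
    [Fintype (G.neighborSet v)] : (palette G c v).ncard = G.degree v := by
  rw [palette_eq_image_neighborSet,
    (isProperEdgeColoring_iff_injOn_neighborSet.1 hc v).ncard_image,
    ← coe_neighborFinset, Set.ncard_coe_finset, card_neighborFinset_eq_degree]

lemma palette_subset_biUnion_neighborSet (G : SimpleGraph V) (c : Sym2 V → ℕ) (v : V) :
    palette G c v ⊆ ⋃ w ∈ G.neighborSet v, palette G c w := by
  rintro n ⟨e, he, hv, rfl⟩
  obtain ⟨w, rfl⟩ := Sym2.mem_iff_exists.1 hv
  exact Set.mem_biUnion (x := w) he ⟨s(v, w), he, Sym2.mem_mk_right v w, rfl⟩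

lemma exists_isProperEdgeColoring [Countable V] (G : SimpleGraph V) :
    ∃ c, IsProperEdgeColoring G c := by
  have : Countable (Sym2 V) := Quot.mk_surjective.countable
  obtain ⟨c, hc⟩ := exists_injective_nat (Sym2 V)
  exact ⟨c, fun _ _ _ _ hne _ => hc.ne hne⟩

lemma paletteIndex_le_ncard (hc : IsProperEdgeColoring G c) :
    paletteIndex G ≤ (Set.range (palette G c)).ncard :=
  Nat.sInf_le ⟨c, hc, rfl⟩

lemma le_paletteIndex [Countable V] {k : ℕ}
    (hk : ∀ c, IsProperEdgeColoring G c → k ≤ (Set.range (palette G c)).ncard) :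
    k ≤ paletteIndex G := by
  obtain ⟨c, hc⟩ := exists_isProperEdgeColoring G
  refine le_csInf ⟨_, c, hc, rfl⟩ ?_
  rintro _ ⟨c', hc', rfl⟩
  exact hk c' hc'

end Palette

section DegreeBound

variable {V : Type*} {G : SimpleGraph V} [G.LocallyFinite] {c : Sym2 V → ℕ} {v : V} {d : ℕ}

lemma IsProperEdgeColoring.degree_le_mul_ncard_image_palette (hc : IsProperEdgeColoring G c)
    (hd : ∀ w, G.Adj v w → G.degree w ≤ d) :
    G.degree v ≤ d * (palette G c '' G.neighborSet v).ncard := by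
  classical
  set P : Finset (Set ℕ) := (G.neighborFinset v).image (palette G c) with hP
  have coe_P : (P : Set (Set ℕ)) = palette G c '' G.neighborSet v := by
    rw [hP, coe_image, coe_neighborFinset]
  have palette_subset : palette G c v ⊆ ⋃ S ∈ P, S := by
    simpa [hP] using palette_subset_biUnion_neighborSet G c v
  have ncard_le (S : Set ℕ) (hS : S ∈ P) : S.ncard ≤ d := by
    obtain ⟨w, hw, rfl⟩ := mem_image.1 hS
    exact (hc.ncard_palette w).trans_le (hd w ((mem_neighborFinset ..).1 hw))
  have finite_biUnion : (⋃ S ∈ P, S).Finite := by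
    refine P.finite_toSet.biUnion fun S hS => ?_
    obtain ⟨w, -, rfl⟩ := mem_image.1 hS
    exact palette_finite G c w
  calc G.degree v = (palette G c v).ncard := (hc.ncard_palette v).symm
    _ ≤ (⋃ S ∈ P, S).ncard := Set.ncard_le_ncard palette_subset finite_biUnion
    _ ≤ ∑ S ∈ P, S.ncard := P.set_ncard_biUnion_le id
    _ ≤ #P • d := sum_le_card_nsmul _ _ _ ncard_le
    _ = d * (palette G c '' G.neighborSet v).ncard := by
      rw [smul_eq_mul, mul_comm, ← coe_P, Set.ncard_coe_finset]

lemma IsProperEdgeColoring.palette_notMem_image_neighborSet (hc : IsProperEdgeColoring G c)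
    (hd : ∀ w, G.Adj v w → G.degree w < G.degree v) :
    palette G c v ∉ palette G c '' G.neighborSet v := by
  rintro ⟨w, hw, heq⟩
  have hlt := hd w hw
  rw [← hc.ncard_palette w, ← hc.ncard_palette v, heq] at hlt
  exact hlt.false

theorem degree_ceilDiv_add_one_le_paletteIndex [Finite V]
    (hd : ∀ w, G.Adj v w → G.degree w ≤ d) (hdv : d < G.degree v) :
    G.degree v ⌈/⌉ d + 1 ≤ paletteIndex G := by
  refine le_paletteIndex fun c hc => ?_
  have hd_pos : 0 < d := by
    obtain ⟨w, hw⟩ := (G.degree_pos_iff_exists_adj v).1 (Nat.zero_lt_of_lt hdv)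
    exact ((G.degree_pos_iff_exists_adj w).2 ⟨v, hw.symm⟩).trans_le (hd w hw)
  have neighbor_palettes :
      G.degree v ⌈/⌉ d ≤ (palette G c '' G.neighborSet v).ncard :=
    (ceilDiv_le_iff_le_mul hd_pos).2 (hc.degree_le_mul_ncard_image_palette hd)
  have palette_notMem : palette G c v ∉ palette G c '' G.neighborSet v :=
    hc.palette_notMem_image_neighborSet fun w hw => (hd w hw).trans_lt hdv
  calc G.degree v ⌈/⌉ d + 1
      ≤ (palette G c '' G.neighborSet v).ncard + 1 := by gcongr
    _ = (insert (palette G c v) (palette G c '' G.neighborSet v)).ncard :=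
      (Set.ncard_insert_of_notMem palette_notMem (Set.toFinite _)).symm
    _ ≤ (Set.range (palette G c)).ncard :=
      Set.ncard_le_ncard
        (Set.insert_subset (Set.mem_range_self v) (Set.image_subset_range _ _)) (Set.toFinite _)

end DegreeBound

section CompleteBipartite

variable {α β : Type*}

lemma neighborSet_completeBipartiteGraph_inl (x : α) :
    (completeBipartiteGraph α β).neighborSet (Sum.inl x) = Set.range Sum.inr := by
  ext (w | w) <;> simp

lemma neighborSet_completeBipartiteGraph_inr (y : β) :
    (completeBipartiteGraph α β).neighborSet (Sum.inr y) = Set.range Sum.inl := by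
  ext (w | w) <;> simp

lemma degree_completeBipartiteGraph_inl [Fintype β] (x : α)
    [Fintype ((completeBipartiteGraph α β).neighborSet (Sum.inl x))] :
    (completeBipartiteGraph α β).degree (Sum.inl x) = Fintype.card β := by
  rw [← card_neighborSet_eq_degree, ← Nat.card_eq_fintype_card, Nat.card_coe_set_eq,
    neighborSet_completeBipartiteGraph_inl, Set.ncard_range_of_injective Sum.inr_injective,
    Nat.card_eq_fintype_card]

lemma degree_completeBipartiteGraph_inr [Fintype α] (y : β)
    [Fintype ((completeBipartiteGraph α β).neighborSet (Sum.inr y))] :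
    (completeBipartiteGraph α β).degree (Sum.inr y) = Fintype.card α := by
  rw [← card_neighborSet_eq_degree, ← Nat.card_eq_fintype_card, Nat.card_coe_set_eq,
    neighborSet_completeBipartiteGraph_inr, Set.ncard_range_of_injective Sum.inl_injective,
    Nat.card_eq_fintype_card]

theorem card_ceilDiv_card_add_one_le_paletteIndex_completeBipartiteGraph
    [Fintype α] [Fintype β] [Nonempty α] (h : Fintype.card α < Fintype.card β) :
    Fintype.card β ⌈/⌉ Fintype.card α + 1 ≤ paletteIndex (completeBipartiteGraph α β) := by
  classical
  obtain ⟨x⟩ := ‹Nonempty α›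
  have degree_x := degree_completeBipartiteGraph_inl (β := β) x
  rw [← degree_x] at h ⊢
  refine degree_ceilDiv_add_one_le_paletteIndex ?_ h
  rintro (x' | y) hadj
  · simp at hadj
  · exact (degree_completeBipartiteGraph_inr y).le

/-- The edge coloring of the complete bipartite graph on `α ⊕ β` given by an array of colors:
`f x y` is the color of the edge joining `x` and `y`. Pairs inside one side are not edges and get
the junk color `0`. -/
def arrayColoring (f : α → β → ℕ) : Sym2 (α ⊕ β) → ℕ :=
  Sym2.lift ⟨fun
    | .inl x, .inr y => f x y
    | .inr y, .inl x => f x y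
    | _, _ => 0, by rintro (_ | _) (_ | _) <;> rfl⟩

lemma isProperEdgeColoring_arrayColoring {f : α → β → ℕ} (row_inj : ∀ x, (f x).Injective)
    (col_inj : ∀ y, (f · y).Injective) :
    IsProperEdgeColoring (completeBipartiteGraph α β) (arrayColoring f) := by
  rw [isProperEdgeColoring_iff_injOn_neighborSet]
  rintro (x | y)
  · rw [neighborSet_completeBipartiteGraph_inl]
    rintro _ ⟨y, rfl⟩ _ ⟨y', rfl⟩ heq
    exact congrArg Sum.inr (row_inj x heq)
  · rw [neighborSet_completeBipartiteGraph_inr]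
    rintro _ ⟨x, rfl⟩ _ ⟨x', rfl⟩ heq
    exact congrArg Sum.inl (col_inj y heq)

lemma palette_arrayColoring_inl (f : α → β → ℕ) (x : α) :
    palette (completeBipartiteGraph α β) (arrayColoring f) (Sum.inl x) = Set.range (f x) := by
  rw [palette_eq_image_neighborSet, neighborSet_completeBipartiteGraph_inl, ← Set.range_comp]
  rfl

lemma palette_arrayColoring_inr (f : α → β → ℕ) (y : β) :
    palette (completeBipartiteGraph α β) (arrayColoring f) (Sum.inr y) = Set.range (f · y) := by
  rw [palette_eq_image_neighborSet, neighborSet_completeBipartiteGraph_inr, ← Set.range_comp]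
  rfl

end CompleteBipartite

section BlockArray

variable {α β κ : Type*}

/-- The array of colors formed by juxtaposing copies of the addition table of `α`, one for each
`k : κ`, on disjoint sets of symbols. The columns are indexed by `β` through `e`, and `ι` turns the
symbols `(k, z)` into colors. -/
def blockArray [Add α] (e : β ≃ κ × α) (ι : κ × α → ℕ) (x : α) (y : β) : ℕ :=
  ι ((e y).1, x + (e y).2)

variable [AddGroup α] (e : β ≃ κ × α)

lemma blockArray_row_injective {ι : κ × α → ℕ} (hι : ι.Injective) (x : α) :
    (blockArray e ι x).Injective := by
  intro y y' heq
  obtain ⟨hblock, hsum⟩ := Prod.mk.inj (hι heq)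
  exact e.injective (Prod.ext hblock (add_left_cancel hsum))

lemma blockArray_column_injective {ι : κ × α → ℕ} (hι : ι.Injective) (y : β) :
    (blockArray e ι · y).Injective := by
  intro x x' heq
  exact add_right_cancel (Prod.mk.inj (hι heq)).2

lemma range_blockArray_row (ι : κ × α → ℕ) (x : α) :
    Set.range (blockArray e ι x) = Set.range ι := by
  have surj : (fun y => ((e y).1, x + (e y).2)).Surjective := fun ⟨k, z⟩ =>
    ⟨e.symm (k, -x + z), by simp⟩
  exact surj.range_comp ι

lemma range_blockArray_column (ι : κ × α → ℕ) (y : β) :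
    Set.range (blockArray e ι · y) = Set.range fun z => ι ((e y).1, z) :=
  (add_right_surjective (e y).2).range_comp fun z => ι ((e y).1, z)

lemma ncard_range_palette_blockArray_le [Finite κ] (ι : κ × α → ℕ) :
    (Set.range (palette (completeBipartiteGraph α β) (arrayColoring (blockArray e ι)))).ncard
      ≤ Nat.card κ + 1 := by
  let blockPalette : κ → Set ℕ := fun k => Set.range fun z => ι (k, z)
  have palettes_subset :
      Set.range (palette (completeBipartiteGraph α β) (arrayColoring (blockArray e ι)))
        ⊆ insert (Set.range ι) (Set.range blockPalette) := by
    rintro _ ⟨x | y, rfl⟩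
    · rw [palette_arrayColoring_inl, range_blockArray_row]
      exact Set.mem_insert _ _
    · rw [palette_arrayColoring_inr, range_blockArray_column]
      exact Set.mem_insert_of_mem _ ⟨(e y).1, rfl⟩
  calc _ ≤ (insert (Set.range ι) (Set.range blockPalette)).ncard :=
        Set.ncard_le_ncard palettes_subset (Set.toFinite _)
    _ ≤ (Set.range blockPalette).ncard + 1 := Set.ncard_insert_le _ _
    _ ≤ Nat.card κ + 1 := by
        gcongr
        exact Finite.card_range_le blockPalette

end BlockArray

theorem paletteIndex_completeBipartiteGraph_le_card_add_one {α β κ : Type*} [AddGroup α]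
    [Countable α] [Finite κ] (e : β ≃ κ × α) :
    paletteIndex (completeBipartiteGraph α β) ≤ Nat.card κ + 1 := by
  obtain ⟨ι, hι⟩ := exists_injective_nat (κ × α)
  have proper := isProperEdgeColoring_arrayColoring (blockArray_row_injective e hι)
    (blockArray_column_injective e hι)
  exact (paletteIndex_le_ncard proper).trans (ncard_range_palette_blockArray_le e ι)

/-- If `a ∣ b` and `a < b`, then `š(K_{a,b}) = 1 + b/a`. -/
theorem palette_index_completeBipartite_dvd (a b : ℕ) (ha : 0 < a) (hab : a < b)
    (hdvd : a ∣ b) :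
    paletteIndex (completeBipartiteGraph (Fin a) (Fin b)) = 1 + b / a := by
  obtain ⟨m, rfl⟩ := exists_eq_mul_left_of_dvd hdvd
  have : NeZero a := ⟨ha.ne'⟩
  have upper : paletteIndex (completeBipartiteGraph (Fin a) (Fin (m * a))) ≤ m + 1 := by
    simpa using paletteIndex_completeBipartiteGraph_le_card_add_one
      (finProdFinEquiv (m := m) (n := a)).symm
  have lower : (m * a) ⌈/⌉ a + 1 ≤ paletteIndex (completeBipartiteGraph (Fin a) (Fin (m * a))) := by
    simpa using card_ceilDiv_card_add_one_le_paletteIndex_completeBipartiteGraph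
      (α := Fin a) (β := Fin (m * a)) (by simpa using hab)
  have exact_div : (m * a) ⌈/⌉ a = m := by
    rw [mul_comm, ← smul_eq_mul, smul_ceilDiv ha]
  rw [exact_div] at lower
  rw [Nat.mul_div_cancel m ha, add_comm]
  exact upper.antisymm lower
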